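/- Let X be a pospace, t a trace from α₀ to α₁, and α a point in the image of t distinct from α₀ and α₁. Let t₁ be the subtrace of t from α₀ to α and t₂ the subtrace of t from α to α₁, so that t = t₁ ⋆ t₂. Then every trace f in the interval [α, t] of tpos(X) (where α is regarded as the constant trace at α) factors uniquely as f = f₁ ⋆ f₂ with f₁ ∈ [α, t₁] and f₂ ∈ [α, t₂], and the map (f₁, f₂) ↦ f₁ ⋆ f₂ is an order isomorphism from the product poset [α, t₁] × [α, t₂] (ordered coordinatewise) onto the interval [α, t]. In particular, [α, t₁] and [α, t₂] are chains, and every chain in tpos(X) from α to t is a chain in this product of chains. -/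

import Mathlib

open unitInterval

noncomputable section

/-- A reparametrization of the unit interval: continuous, monotone, fixing the endpoints. -/
def IsReparam (φ : unitInterval → unitInterval) : Prop :=
  Continuous φ ∧ Monotone φ ∧ φ 0 = 0 ∧ φ 1 = 1

/-- Reparametrization equivalence of paths. -/
def ReparamEquiv {X : Type*} (f g : unitInterval → X) : Prop :=
  ∃ φ ψ : unitInterval → unitInterval, IsReparam φ ∧ IsReparam ψ ∧ f ∘ φ = g ∘ ψ

/-- A dipath in a pospace: a continuous monotone map `[0,1] → X`. -/
def IsDipath {X : Type*} [TopologicalSpace X] [Preorder X] (p : unitInterval → X) : Prop :=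
  Continuous p ∧ Monotone p

/-- Concatenation of paths: `f` (rescaled) on `[0,1/2]`, `g` (rescaled) on `[1/2,1]`. -/
def concatFun {X : Type*} (f g : unitInterval → X) : unitInterval → X :=
  fun t => if (t : ℝ) ≤ 1 / 2 then f (Set.projIcc 0 1 zero_le_one (2 * (t : ℝ)))
    else g (Set.projIcc 0 1 zero_le_one (2 * (t : ℝ) - 1))

/-- Traces: paths up to reparametrization equivalence. -/
def Trace (X : Type*) : Type _ := Quot (ReparamEquiv (X := X))

/-- The trace of a path. -/
def trc {X : Type*} (f : unitInterval → X) : Trace X := Quot.mk _ f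

/-- The order on traces of a pospace: `⟨f⟩ ≤ ⟨g⟩` iff `⟨g⟩ = ⟨u⟩ ⋆ ⟨f⟩ ⋆ ⟨v⟩` for dipaths `u,v`. -/
def TraceLE {X : Type*} [TopologicalSpace X] [PartialOrder X] (a b : Trace X) : Prop :=
  ∃ f u v : unitInterval → X,
    IsDipath f ∧ IsDipath u ∧ IsDipath v ∧
    u 1 = f 0 ∧ f 1 = v 0 ∧
    a = trc f ∧ b = trc (concatFun (concatFun u f) v)

/-- The interval `[a, b]` in the trace poset. -/
def TInterval {X : Type*} [TopologicalSpace X] [PartialOrder X] (a b : Trace X) :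
    Set (Trace X) :=
  {c | TraceLE a c ∧ TraceLE c b}

/-! The trace of a dipath is determined by its image, and the order on traces of dipaths is
inclusion of images. Moreover the image of a subtrace of `t` is an order interval in the image of
`t`, and the point `α` cuts the image of `f₁ ⋆ f₂` into the part below `α`, which is the image of
`f₁`, and the part above `α`, which is the image of `f₂`. Hence inclusions of images, and with them
the order, split coordinatewise. -/

open Set

section Comparable

variable {X Y : Type*} [TopologicalSpace X] [PartialOrder X] [OrderClosedTopology X]
  [TopologicalSpace Y]

theorem exists_eq_of_isPreconnected_of_comparable {s : Set Y} (hs : IsPreconnected s) {u v : Y → X}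
    (hu : Continuous u) (hv : Continuous v) (huv : ∀ y ∈ s, u y ≤ v y ∨ v y ≤ u y) {a b : Y}
    (ha : a ∈ s) (hb : b ∈ s) (hua : u a ≤ v a) (hvb : v b ≤ u b) : ∃ y ∈ s, u y = v y := by
  obtain ⟨y, hys, huy, hvy⟩ := isPreconnected_closed_iff.1 hs {y | u y ≤ v y} {y | v y ≤ u y}
    (isClosed_le hu hv) (isClosed_le hv hu) huv ⟨a, ha, hua⟩ ⟨b, hb, hvb⟩
  exact ⟨y, hys, le_antisymm huy hvy⟩

end Comparable

section Overtake

variable {X : Type*} [PartialOrder X] {F G : ℝ → X} {c d x : ℝ}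

/-- The points `(x, c - x)` of the antidiagonal of level `c` with `x ≥ 0` and `c - x ≤ 1` at which
`F` has overtaken `G`, recorded by their first coordinate. -/
def overtakeSet (F G : ℝ → X) (c : ℝ) : Set ℝ :=
  {x | max 0 (c - 1) ≤ x ∧ G (c - x) ≤ F x}

/-- The first moment at which `F` overtakes `G` along the antidiagonal of level `c`. If `F` and `G`
are continuous and monotone, have the same values at `0` and at `1`, and are pointwise comparable,
then the points `(overtakeTime F G c, c - overtakeTime F G c)` trace out a monotone arc in the fibre
product of `F` and `G` over `X` as `c` runs from `0` to `2`. -/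
def overtakeTime (F G : ℝ → X) (c : ℝ) : ℝ :=
  sInf (overtakeSet F G c)

theorem bddBelow_overtakeSet : BddBelow (overtakeSet F G c) :=
  ⟨max 0 (c - 1), fun _ hx => hx.1⟩

theorem max_zero_mem_overtakeSet (hF : Monotone F) (hG : Monotone G) (h₀ : G 0 ≤ F 0) :
    max 0 c ∈ overtakeSet F G c :=
  ⟨max_le_max_left 0 (by linarith),
    calc
      G (c - max 0 c) ≤ G 0 := hG (sub_nonpos.2 (le_max_right 0 c))
      _ ≤ F 0 := h₀
      _ ≤ F (max 0 c) := hF (le_max_left 0 c)⟩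

theorem overtakeTime_zero (hF : Monotone F) (hG : Monotone G) (h₀ : G 0 ≤ F 0) :
    overtakeTime F G 0 = 0 := by
  refine IsLeast.csInf_eq ⟨?_, fun x hx => (le_max_left _ _).trans hx.1⟩
  simpa only [max_self] using max_zero_mem_overtakeSet (c := 0) hF hG h₀

theorem overtakeTime_two (h₁ : G 1 ≤ F 1) : overtakeTime F G 2 = 1 := by
  have two_sub_one : (2 : ℝ) - 1 = 1 := by norm_num
  refine IsLeast.csInf_eq ⟨⟨?_, ?_⟩, fun x hx => ?_⟩
  · rw [two_sub_one, max_eq_right zero_le_one]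
  · rwa [two_sub_one]
  · exact two_sub_one ▸ (le_max_right _ _).trans hx.1

theorem monotone_overtakeTime (hF : Monotone F) (hG : Monotone G) (h₀ : G 0 ≤ F 0) :
    Monotone (overtakeTime F G) := fun c d hcd =>
  csInf_le_csInf bddBelow_overtakeSet ⟨_, max_zero_mem_overtakeSet hF hG h₀⟩ fun _ hx =>
    ⟨(max_le_max_left 0 (by linarith)).trans hx.1, (hG (by linarith)).trans hx.2⟩

theorem add_mem_overtakeSet (hF : Monotone F) (hcd : c ≤ d) (hx : x ∈ overtakeSet F G c) :
    x + (d - c) ∈ overtakeSet F G d := by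
  obtain ⟨hx₀, hx₁⟩ := max_le_iff.1 hx.1
  refine ⟨max_le (by linarith) (by linarith), ?_⟩
  calc
    G (d - (x + (d - c))) = G (c - x) := by ring_nf
    _ ≤ F x := hx.2
    _ ≤ F (x + (d - c)) := hF (by linarith)

theorem monotone_sub_overtakeTime (hF : Monotone F) (hG : Monotone G) (h₀ : G 0 ≤ F 0) :
    Monotone fun c => c - overtakeTime F G c := by
  intro c d hcd
  have shift : overtakeTime F G d - (d - c) ≤ overtakeTime F G c :=
    le_csInf ⟨_, max_zero_mem_overtakeSet hF hG h₀⟩ fun x hx =>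
      sub_le_iff_le_add.2 (csInf_le bddBelow_overtakeSet (add_mem_overtakeSet hF hcd hx))
  linarith

theorem continuous_of_monotone_of_monotone_sub {p : ℝ → ℝ} (hp : Monotone p)
    (hq : Monotone fun c => c - p c) : Continuous p := by
  refine (LipschitzWith.of_le_add fun c d => ?_).continuous
  rcases le_total c d with hcd | hdc
  · exact (hp hcd).trans (le_add_of_nonneg_right dist_nonneg)
  · rw [Real.dist_eq, abs_of_nonneg (sub_nonneg.2 hdc)]
    linarith [hq hdc]

variable [TopologicalSpace X] [OrderClosedTopology X]

theorem isLeast_overtakeTime (hF : Monotone F) (hG : Monotone G) (hFc : Continuous F)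
    (hGc : Continuous G) (h₀ : G 0 ≤ F 0) :
    IsLeast (overtakeSet F G c) (overtakeTime F G c) := by
  have closed : IsClosed (overtakeSet F G c) :=
    isClosed_Ici.inter (isClosed_le (hGc.comp (continuous_const.sub continuous_id)) hFc)
  exact closed.isLeast_csInf ⟨_, max_zero_mem_overtakeSet hF hG h₀⟩ bddBelow_overtakeSet

theorem apply_overtakeTime (hF : Monotone F) (hG : Monotone G) (hFc : Continuous F)
    (hGc : Continuous G) (hFG : ∀ x y, F x ≤ G y ∨ G y ≤ F x) (h₀ : F 0 = G 0) (h₁ : F 1 = G 1)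
    (hc : c ∈ Icc (0 : ℝ) 2) :
    F (overtakeTime F G c) = G (c - overtakeTime F G c) := by
  have least := isLeast_overtakeTime (c := c) hF hG hFc hGc h₀.ge
  have start : F (max 0 (c - 1)) ≤ G (c - max 0 (c - 1)) := by
    rcases max_choice 0 (c - 1) with h | h <;> rw [h]
    · rw [h₀, sub_zero]
      exact hG hc.1
    · rw [sub_sub_cancel, ← h₁]
      exact hF (by linarith [hc.2])
  -- A meeting point no later than the overtaking time is in the overtake set, so it is that time.
  obtain ⟨x, hx, hFx⟩ := exists_eq_of_isPreconnected_of_comparable isPreconnected_Icc hFc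
    (hGc.comp (continuous_const.sub continuous_id)) (fun x _ => hFG x (c - x))
    (left_mem_Icc.2 least.1.1) (right_mem_Icc.2 least.1.1) start least.1.2
  rwa [hx.2.antisymm (least.2 ⟨hx.1, hFx.ge⟩)] at hFx

end Overtake

theorem IsReparam.surjective {φ : unitInterval → unitInterval} (hφ : IsReparam φ) :
    Function.Surjective φ := by
  intro y
  have ivt := intermediate_value_univ (0 : unitInterval) 1 hφ.1
  rw [hφ.2.2.1, hφ.2.2.2] at ivt
  exact ivt ⟨y.2.1, y.2.2⟩

theorem isReparam_projIcc {p : ℝ → ℝ} (hp : Monotone p) (hpc : Continuous p) (h₀ : p 0 = 0)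
    (h₁ : p 1 = 1) : IsReparam fun s => projIcc 0 1 zero_le_one (p s) :=
  ⟨continuous_projIcc.comp (hpc.comp continuous_subtype_val),
    fun _ _ h => monotone_projIcc _ (hp h),
    by simp only [Icc.coe_zero, h₀, projIcc_left]; rfl,
    by simp only [Icc.coe_one, h₁, projIcc_right]; rfl⟩

theorem range_eq_of_trc_eq {X : Type*} {f g : unitInterval → X} (h : trc f = trc g) :
    range f = range g := by
  have respects : ∀ a b : unitInterval → X, ReparamEquiv a b → range a = range b := by
    rintro a b ⟨φ, ψ, hφ, hψ, hab⟩
    rw [← hφ.surjective.range_comp a, hab, hψ.surjective.range_comp b]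
  exact congrArg (Quot.lift range respects) h

theorem exists_isDipath_of_mem_TInterval {X : Type*} [TopologicalSpace X] [PartialOrder X]
    {a b c : Trace X} (hc : c ∈ TInterval a b) : ∃ f, IsDipath f ∧ c = trc f := by
  obtain ⟨f, _, _, hf, _, _, _, _, hcf, _⟩ := hc.2
  exact ⟨f, hf, hcf⟩

theorem concatFun_zero {X : Type*} (f g : unitInterval → X) : concatFun f g 0 = f 0 := by
  simp [concatFun]

theorem concatFun_one {X : Type*} (f g : unitInterval → X) : concatFun f g 1 = g 1 := by
  norm_num [concatFun]

theorem concatFun_const {X : Type*} (x : X) :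
    concatFun (fun _ => x) (fun _ => x) = fun _ => x :=
  funext fun _ => ite_self x

namespace IsDipath

section Elementary

variable {X : Type*} [TopologicalSpace X] [Preorder X] {f g : unitInterval → X}

theorem const (x : X) : IsDipath fun _ => x :=
  ⟨continuous_const, monotone_const⟩

theorem range_subset_Icc (hf : IsDipath f) : range f ⊆ Icc (f 0) (f 1) :=
  range_subset_iff.2 fun _ => ⟨hf.2 unitInterval.nonneg', hf.2 unitInterval.le_one'⟩

theorem le_total_of_mem_range (hf : IsDipath f) {x y : X} (hx : x ∈ range f) (hy : y ∈ range f) :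
    x ≤ y ∨ y ≤ x := by
  obtain ⟨a, rfl⟩ := hx
  obtain ⟨b, rfl⟩ := hy
  exact (le_total a b).imp (fun h => hf.2 h) (fun h => hf.2 h)

/-- A dipath as a bundled `Path`, under which `concatFun` is definitionally `Path.trans`. -/
def toPath (hf : IsDipath f) {x y : X} (hx : f 0 = x) (hy : f 1 = y) : Path x y :=
  ⟨⟨f, hf.1⟩, hx, hy⟩

theorem range_concatFun (hf : IsDipath f) (hg : IsDipath g) (h : f 1 = g 0) :
    range (concatFun f g) = range f ∪ range g :=
  Path.trans_range (hf.toPath rfl h) (hg.toPath rfl rfl)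

theorem concat (hf : IsDipath f) (hg : IsDipath g) (h : f 1 = g 0) :
    IsDipath (concatFun f g) := by
  refine ⟨((hf.toPath rfl h).trans (hg.toPath rfl rfl)).continuous, fun s s' hs => ?_⟩
  have hs' : (s : ℝ) ≤ s' := hs
  simp only [concatFun]
  split_ifs with hs₁ hs₁' hs₁'
  · exact hf.2 (monotone_projIcc _ (by linarith))
  · exact (hf.range_subset_Icc (mem_range_self _)).2.trans
      (h.le.trans (hg.range_subset_Icc (mem_range_self _)).1)
  · exact absurd (hs'.trans hs₁') hs₁
  · exact hg.2 (monotone_projIcc _ (by linarith))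

end Elementary

section PartialOrder

variable {X : Type*} [TopologicalSpace X] [PartialOrder X] {f g t : unitInterval → X}

theorem range_concatFun_inter_Iic (hf : IsDipath f) (hg : IsDipath g) (h : f 1 = g 0) :
    range (concatFun f g) ∩ Iic (f 1) = range f := by
  rw [hf.range_concatFun hg h]
  refine Subset.antisymm ?_ fun x hx => ⟨Or.inl hx, (hf.range_subset_Icc hx).2⟩
  rintro x ⟨hx | hx, hxf⟩
  · exact hx
  · exact ⟨1, (h.le.trans (hg.range_subset_Icc hx).1).antisymm hxf⟩

theorem range_concatFun_inter_Ici (hf : IsDipath f) (hg : IsDipath g) (h : f 1 = g 0) :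
    range (concatFun f g) ∩ Ici (f 1) = range g := by
  rw [hf.range_concatFun hg h]
  refine Subset.antisymm ?_ fun x hx => ⟨Or.inr hx, h.le.trans (hg.range_subset_Icc hx).1⟩
  rintro x ⟨hx | hx, hfx⟩
  · exact ⟨0, h.symm.trans (hfx.antisymm (hf.range_subset_Icc hx).2)⟩
  · exact hx

theorem exists_isDipath_range_subset (ht : IsDipath t) {x y : X} (hx : x ∈ range t)
    (hy : y ∈ range t) (hxy : x ≤ y) : ∃ f, IsDipath f ∧ f 0 = x ∧ f 1 = y ∧ range f ⊆ range t := by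
  obtain ⟨a, rfl⟩ := hx
  obtain ⟨b, rfl⟩ := hy
  rcases le_total a b with hab | hba
  · refine ⟨IccExtend hab ((Icc a b).domRestrict t),
      ⟨(ht.1.comp continuous_subtype_val).Icc_extend',
        (ht.2.comp (Subtype.mono_coe _)).IccExtend hab⟩,
      IccExtend_of_le_left hab _ unitInterval.nonneg',
      IccExtend_of_right_le hab _ unitInterval.le_one', ?_⟩
    rw [IccExtend_range, range_domRestrict]
    exact image_subset_range t _
  · exact ⟨fun _ => t a, const (t a), rfl, hxy.antisymm (ht.2 hba),
      range_subset_iff.2 fun _ => mem_range_self a⟩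

variable [OrderClosedTopology X]

theorem range_eq_inter_Icc (hf : IsDipath f) (ht : IsDipath t) (hft : range f ⊆ range t) :
    range f = range t ∩ Icc (f 0) (f 1) := by
  refine Subset.antisymm (subset_inter hft hf.range_subset_Icc) ?_
  rintro x ⟨hxt, hx₀, hx₁⟩
  obtain ⟨s, -, hs⟩ := exists_eq_of_isPreconnected_of_comparable isPreconnected_univ hf.1
    continuous_const (fun s _ => ht.le_total_of_mem_range (hft (mem_range_self s)) hxt)
    (mem_univ 0) (mem_univ 1) hx₀ hx₁
  exact ⟨s, hs⟩

theorem range_eq_of_subset (hf : IsDipath f) (ht : IsDipath t) (hft : range f ⊆ range t)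
    (h₀ : f 0 = t 0) (h₁ : f 1 = t 1) : range f = range t := by
  rw [hf.range_eq_inter_Icc ht hft, h₀, h₁, inter_eq_left.2 ht.range_subset_Icc]

theorem reparamEquiv_of_comparable (hf : IsDipath f) (hg : IsDipath g)
    (hfg : ∀ a b, f a ≤ g b ∨ g b ≤ f a) (h₀ : f 0 = g 0) (h₁ : f 1 = g 1) :
    ReparamEquiv f g := by
  set F := IccExtend (zero_le_one' ℝ) f
  set G := IccExtend (zero_le_one' ℝ) g
  have hF : Monotone F := hf.2.IccExtend zero_le_one
  have hG : Monotone G := hg.2.IccExtend zero_le_one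
  have hFG₀ : F 0 = G 0 :=
    (IccExtend_left _ f).trans (h₀.trans (IccExtend_left _ g).symm)
  have hFG₁ : F 1 = G 1 :=
    (IccExtend_right _ f).trans (h₁.trans (IccExtend_right _ g).symm)
  have hp := monotone_overtakeTime hF hG hFG₀.ge
  have hq := monotone_sub_overtakeTime hF hG hFG₀.ge
  have hpc := continuous_of_monotone_of_monotone_sub hp hq
  have double_mono : Monotone fun s : ℝ => 2 * s := monotone_id.const_mul zero_le_two
  have p_zero := overtakeTime_zero hF hG hFG₀.ge
  have p_two := overtakeTime_two hFG₁.ge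
  refine ⟨_, _,
    isReparam_projIcc (hp.comp double_mono) (by fun_prop) (by simp [p_zero]) (by simp [p_two]),
    isReparam_projIcc (hq.comp double_mono) (by fun_prop) (by simp [p_zero])
      (by norm_num [p_two]), funext fun s => ?_⟩
  exact apply_overtakeTime hF hG hf.1.Icc_extend' hg.1.Icc_extend' (fun _ _ => hfg _ _) hFG₀ hFG₁
    ⟨by linarith [s.2.1], by linarith [s.2.2]⟩

theorem trc_eq_of_range_eq (hf : IsDipath f) (hg : IsDipath g) (h : range f = range g) :
    trc f = trc g := by
  have hf_Icc : range g ⊆ Icc (f 0) (f 1) := h ▸ hf.range_subset_Icc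
  have hg_Icc : range f ⊆ Icc (g 0) (g 1) := h ▸ hg.range_subset_Icc
  exact Quot.sound <| hf.reparamEquiv_of_comparable hg
    (fun _ _ => hf.le_total_of_mem_range (mem_range_self _) (h ▸ mem_range_self _))
    ((hf_Icc (mem_range_self 0)).1.antisymm (hg_Icc (mem_range_self 0)).1)
    ((hg_Icc (mem_range_self 1)).2.antisymm (hf_Icc (mem_range_self 1)).2)

theorem traceLE_of_range_subset (hf : IsDipath f) (hg : IsDipath g) (h : range f ⊆ range g) :
    TraceLE (trc f) (trc g) := by
  obtain ⟨u, hu, hu₀, hu₁, hug⟩ := hg.exists_isDipath_range_subset (mem_range_self 0)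
    (h (mem_range_self 0)) (hg.range_subset_Icc (h (mem_range_self 0))).1
  obtain ⟨v, hv, hv₀, hv₁, hvg⟩ := hg.exists_isDipath_range_subset (h (mem_range_self 1))
    (mem_range_self 1) (hg.range_subset_Icc (h (mem_range_self 1))).2
  have huf := hu.concat hf hu₁
  have hufv : concatFun u f 1 = v 0 := by rw [concatFun_one, hv₀]
  refine ⟨f, u, v, hf, hu, hv, hu₁, hv₀.symm, rfl, Eq.symm ?_⟩
  refine (huf.concat hv hufv).trc_eq_of_range_eq hg
    ((huf.concat hv hufv).range_eq_of_subset hg ?_ ?_ ?_)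
  · rw [huf.range_concatFun hv hufv, hu.range_concatFun hf hu₁]
    exact union_subset (union_subset hug h) hvg
  · rw [concatFun_zero, concatFun_zero, hu₀]
  · rw [concatFun_one, hv₁]

theorem traceLE_iff_range_subset (hf : IsDipath f) (hg : IsDipath g) :
    TraceLE (trc f) (trc g) ↔ range f ⊆ range g := by
  refine ⟨?_, hf.traceLE_of_range_subset hg⟩
  rintro ⟨m, u, v, hm, hu, hv, hum, hmv, hfm, hg_eq⟩
  have humv : concatFun u m 1 = v 0 := (concatFun_one u m).trans hmv
  rw [range_eq_of_trc_eq hfm, range_eq_of_trc_eq hg_eq,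
    (hu.concat hm hum).range_concatFun hv humv, hu.range_concatFun hm hum]
  exact subset_union_right.trans subset_union_left

theorem traceLE_antisymm (hf : IsDipath f) (hg : IsDipath g) (hfg : TraceLE (trc f) (trc g))
    (hgf : TraceLE (trc g) (trc f)) : trc f = trc g :=
  hf.trc_eq_of_range_eq hg
    (((hf.traceLE_iff_range_subset hg).1 hfg).antisymm ((hg.traceLE_iff_range_subset hf).1 hgf))

theorem trc_mem_TInterval_const_iff (hf : IsDipath f) (ht : IsDipath t) {x : X} :
    trc f ∈ TInterval (trc fun _ => x) (trc t) ↔ x ∈ range f ∧ range f ⊆ range t := by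
  change _ ∧ _ ↔ _
  rw [(const x).traceLE_iff_range_subset hf, hf.traceLE_iff_range_subset ht, range_const,
    singleton_subset_iff]

theorem apply_zero_eq_of_mem_TInterval (hf : IsDipath f) (ht : IsDipath t)
    (h : trc f ∈ TInterval (trc fun _ => t 0) (trc t)) : f 0 = t 0 := by
  rw [hf.trc_mem_TInterval_const_iff ht] at h
  exact (hf.range_subset_Icc h.1).1.antisymm (ht.range_subset_Icc (h.2 (mem_range_self 0))).1

theorem apply_one_eq_of_mem_TInterval (hf : IsDipath f) (ht : IsDipath t)
    (h : trc f ∈ TInterval (trc fun _ => t 1) (trc t)) : f 1 = t 1 := by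
  rw [hf.trc_mem_TInterval_const_iff ht] at h
  exact (ht.range_subset_Icc (h.2 (mem_range_self 1))).2.antisymm (hf.range_subset_Icc h.1).2

theorem traceLE_of_Icc_subset (hf : IsDipath f) (hg : IsDipath g) (ht : IsDipath t)
    (hft : range f ⊆ range t) (hgt : range g ⊆ range t) (h₀ : g 0 ≤ f 0) (h₁ : f 1 ≤ g 1) :
    TraceLE (trc f) (trc g) := by
  rw [hf.traceLE_iff_range_subset hg, hf.range_eq_inter_Icc ht hft, hg.range_eq_inter_Icc ht hgt]
  exact inter_subset_inter_right _ (Icc_subset_Icc h₀ h₁)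

theorem isChain_TInterval_zero (ht : IsDipath t) :
    IsChain TraceLE (TInterval (trc fun _ => t 0) (trc t)) := by
  intro a ha b hb _
  obtain ⟨f, hf, rfl⟩ := exists_isDipath_of_mem_TInterval ha
  obtain ⟨g, hg, rfl⟩ := exists_isDipath_of_mem_TInterval hb
  have hfg : f 0 = g 0 :=
    (hf.apply_zero_eq_of_mem_TInterval ht ha).trans (hg.apply_zero_eq_of_mem_TInterval ht hb).symm
  have hft := ((hf.trc_mem_TInterval_const_iff ht).1 ha).2
  have hgt := ((hg.trc_mem_TInterval_const_iff ht).1 hb).2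
  exact (ht.le_total_of_mem_range (hft (mem_range_self 1)) (hgt (mem_range_self 1))).imp
    (hf.traceLE_of_Icc_subset hg ht hft hgt hfg.ge) (hg.traceLE_of_Icc_subset hf ht hgt hft hfg.le)

theorem isChain_TInterval_one (ht : IsDipath t) :
    IsChain TraceLE (TInterval (trc fun _ => t 1) (trc t)) := by
  intro a ha b hb _
  obtain ⟨f, hf, rfl⟩ := exists_isDipath_of_mem_TInterval ha
  obtain ⟨g, hg, rfl⟩ := exists_isDipath_of_mem_TInterval hb
  have hfg : f 1 = g 1 :=
    (hf.apply_one_eq_of_mem_TInterval ht ha).trans (hg.apply_one_eq_of_mem_TInterval ht hb).symm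
  have hft := ((hf.trc_mem_TInterval_const_iff ht).1 ha).2
  have hgt := ((hg.trc_mem_TInterval_const_iff ht).1 hb).2
  exact (ht.le_total_of_mem_range (hgt (mem_range_self 0)) (hft (mem_range_self 0))).imp
    (fun h => hf.traceLE_of_Icc_subset hg ht hft hgt h hfg.le)
    (fun h => hg.traceLE_of_Icc_subset hf ht hgt hft h hfg.ge)

end PartialOrder

end IsDipath

/-- `IsFactorization x c p` says that `c = p.1 ⋆ p.2`, where `p.1` and `p.2` are traces of dipaths
meeting at the point `x`. Concatenation of traces being only partially defined, it is encoded as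
this relation. -/
def IsFactorization {X : Type*} [TopologicalSpace X] [Preorder X] (x : X) (c : Trace X)
    (p : Trace X × Trace X) : Prop :=
  ∃ g₁ g₂ : unitInterval → X, IsDipath g₁ ∧ IsDipath g₂ ∧ g₁ 1 = x ∧ g₂ 0 = x ∧
    p = (trc g₁, trc g₂) ∧ c = trc (concatFun g₁ g₂)

namespace IsFactorization

variable {X : Type*} [TopologicalSpace X]

theorem const [Preorder X] (x : X) :
    IsFactorization x (trc fun _ => x) (trc fun _ => x, trc fun _ => x) :=
  ⟨_, _, .const x, .const x, rfl, rfl, rfl, by rw [concatFun_const]⟩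

variable [PartialOrder X] [OrderClosedTopology X] {x : X} {c d : Trace X} {p q : Trace X × Trace X}

theorem exists_of_mem_range {f : unitInterval → X} (hf : IsDipath f) (hx : x ∈ range f) :
    ∃ p, IsFactorization x (trc f) p := by
  obtain ⟨f₁, hf₁, hf₁₀, hf₁₁, hf₁f⟩ := hf.exists_isDipath_range_subset (mem_range_self 0) hx
    (hf.range_subset_Icc hx).1
  obtain ⟨f₂, hf₂, hf₂₀, hf₂₁, hf₂f⟩ := hf.exists_isDipath_range_subset hx (mem_range_self 1)
    (hf.range_subset_Icc hx).2
  have meet : f₁ 1 = f₂ 0 := hf₁₁.trans hf₂₀.symm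
  have hf₁₂ := hf₁.concat hf₂ meet
  refine ⟨_, f₁, f₂, hf₁, hf₂, hf₁₁, hf₂₀, rfl, (hf₁₂.trc_eq_of_range_eq hf ?_).symm⟩
  refine hf₁₂.range_eq_of_subset hf ?_ ((concatFun_zero f₁ f₂).trans hf₁₀)
    ((concatFun_one f₁ f₂).trans hf₂₁)
  rw [hf₁.range_concatFun hf₂ meet]
  exact union_subset hf₁f hf₂f

theorem exists_of_mem_TInterval (hc : c ∈ TInterval (trc fun _ => x) d) :
    ∃ p, IsFactorization x c p := by
  obtain ⟨f, hf, rfl⟩ := exists_isDipath_of_mem_TInterval hc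
  have hx := ((IsDipath.const x).traceLE_iff_range_subset hf).1 hc.1
  exact exists_of_mem_range hf (hx (mem_range_self 0))

theorem traceLE_iff (hc : IsFactorization x c p) (hd : IsFactorization x d q) :
    TraceLE c d ↔ TraceLE p.1 q.1 ∧ TraceLE p.2 q.2 := by
  obtain ⟨f₁, f₂, hf₁, hf₂, rfl, hf, rfl, rfl⟩ := hc
  obtain ⟨g₁, g₂, hg₁, hg₂, hg, hg', rfl, rfl⟩ := hd
  have hg₁₂ : g₁ 1 = g₂ 0 := hg.trans hg'.symm
  rw [(hf₁.concat hf₂ hf.symm).traceLE_iff_range_subset (hg₁.concat hg₂ hg₁₂),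
    hf₁.traceLE_iff_range_subset hg₁, hf₂.traceLE_iff_range_subset hg₂]
  refine ⟨fun h => ⟨?_, ?_⟩, fun h => ?_⟩
  · rw [← hf₁.range_concatFun_inter_Iic hf₂ hf.symm, ← hg₁.range_concatFun_inter_Iic hg₂ hg₁₂, hg]
    exact inter_subset_inter_left _ h
  · rw [← hf₁.range_concatFun_inter_Ici hf₂ hf.symm, ← hg₁.range_concatFun_inter_Ici hg₂ hg₁₂, hg]
    exact inter_subset_inter_left _ h
  · rw [hf₁.range_concatFun hf₂ hf.symm, hg₁.range_concatFun hg₂ hg₁₂]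
    exact union_subset_union h.1 h.2

theorem traceLE_refl (hc : IsFactorization x c p) : TraceLE c c := by
  obtain ⟨g₁, g₂, hg₁, hg₂, rfl, hg, -, rfl⟩ := hc
  have hg₁₂ := hg₁.concat hg₂ hg.symm
  exact hg₁₂.traceLE_of_range_subset hg₁₂ Subset.rfl

theorem unique (hp : IsFactorization x c p) (hq : IsFactorization x c q) : p = q := by
  obtain ⟨hpq₁, hpq₂⟩ := (hp.traceLE_iff hq).1 hp.traceLE_refl
  obtain ⟨hqp₁, hqp₂⟩ := (hq.traceLE_iff hp).1 hp.traceLE_refl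
  obtain ⟨f₁, f₂, hf₁, hf₂, -, -, rfl, -⟩ := hp
  obtain ⟨g₁, g₂, hg₁, hg₂, -, -, rfl, -⟩ := hq
  exact Prod.ext (hf₁.traceLE_antisymm hg₁ hpq₁ hqp₁) (hf₂.traceLE_antisymm hg₂ hpq₂ hqp₂)

theorem mem_TInterval_iff (hc : IsFactorization x c p) (hd : IsFactorization x d q) :
    c ∈ TInterval (trc fun _ => x) d ↔
      p.1 ∈ TInterval (trc fun _ => x) q.1 ∧ p.2 ∈ TInterval (trc fun _ => x) q.2 :=
  (and_congr ((const x).traceLE_iff hc) (hc.traceLE_iff hd)).trans and_and_and_comm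

theorem isChain {C : Set (Trace X)} (hC : IsChain TraceLE C) :
    IsChain (fun p q : Trace X × Trace X => TraceLE p.1 q.1 ∧ TraceLE p.2 q.2)
      {p | ∃ c ∈ C, IsFactorization x c p} := by
  rintro p ⟨c, hcC, hc⟩ q ⟨d, hdC, hd⟩ -
  beta_reduce
  rw [← hc.traceLE_iff hd, ← hd.traceLE_iff hc]
  by_cases hcd : c = d
  · exact Or.inl (hcd ▸ hc.traceLE_refl)
  · exact hC hcC hdC hcd

theorem iff_exists_of_mem_TInterval {t : unitInterval → X} (ht : IsDipath t)
    (hp : p.1 ∈ TInterval (trc fun _ => t 1) (trc t)) :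
    IsFactorization (t 1) c p ↔ ∃ g₁ g₂ : unitInterval → X, IsDipath g₁ ∧ IsDipath g₂ ∧
      g₁ 1 = g₂ 0 ∧ p.1 = trc g₁ ∧ p.2 = trc g₂ ∧ c = trc (concatFun g₁ g₂) := by
  constructor
  · rintro ⟨g₁, g₂, hg₁, hg₂, hgt, hg, rfl, hc⟩
    exact ⟨g₁, g₂, hg₁, hg₂, hgt.trans hg.symm, rfl, rfl, hc⟩
  · rintro ⟨g₁, g₂, hg₁, hg₂, hg, hpg₁, hpg₂, hc⟩
    have hgt := hg₁.apply_one_eq_of_mem_TInterval ht (hpg₁ ▸ hp)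
    exact ⟨g₁, g₂, hg₁, hg₂, hgt, hg.symm.trans hgt, Prod.ext hpg₁ hpg₂, hc⟩

end IsFactorization

/-- Let `X` be a pospace and `t = t₁ ⋆ t₂` a trace passing through an interior
point `α = t₁(1) = t₂(0)` distinct from the endpoints.  Then the intervals `[α, t₁]` and
`[α, t₂]` of the trace poset are chains, every trace in `[α, t]` factors uniquely as `f₁ ⋆ f₂`
with `(f₁, f₂) ∈ [α, t₁] × [α, t₂]`, and concatenation `(f₁, f₂) ↦ f₁ ⋆ f₂` is an order
isomorphism from the product poset `[α, t₁] × [α, t₂]` onto `[α, t]`; in particular every chain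
in `[α, t]` corresponds to a chain in this product of chains. -/
theorem interval_iso_product_of_chains
    {X : Type*} [TopologicalSpace X] [PartialOrder X] [T2Space X] [OrderClosedTopology X]
    (t₁ t₂ : unitInterval → X) (ht₁ : IsDipath t₁) (ht₂ : IsDipath t₂)
    (hmid : t₁ 1 = t₂ 0) (hne₀ : t₁ 1 ≠ t₁ 0) (hne₁ : t₂ 0 ≠ t₂ 1) :
    -- notation: α as a constant trace, the two side intervals and the full interval
    ∀ cα I₁ I₂ J, cα = trc (fun _ => t₁ 1) →
      I₁ = TInterval cα (trc t₁) → I₂ = TInterval cα (trc t₂) →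
      J = TInterval cα (trc (concatFun t₁ t₂)) →
      -- the two intervals are chains
      (IsChain TraceLE I₁ ∧ IsChain TraceLE I₂) ∧
      -- unique factorization of any trace in [α, t]
      (∀ c ∈ J, ∃! p : Trace X × Trace X, p.1 ∈ I₁ ∧ p.2 ∈ I₂ ∧
        ∃ g₁ g₂ : unitInterval → X, IsDipath g₁ ∧ IsDipath g₂ ∧ g₁ 1 = g₂ 0 ∧
          p.1 = trc g₁ ∧ p.2 = trc g₂ ∧ c = trc (concatFun g₁ g₂)) ∧
      -- concatenation maps the product into [α, t] ...
      (∀ g₁ g₂ : unitInterval → X, IsDipath g₁ → IsDipath g₂ → g₁ 1 = g₂ 0 →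
        trc g₁ ∈ I₁ → trc g₂ ∈ I₂ → trc (concatFun g₁ g₂) ∈ J) ∧
      -- ... and is an order isomorphism for the coordinatewise order
      (∀ g₁ g₂ g₁' g₂' : unitInterval → X,
        IsDipath g₁ → IsDipath g₂ → IsDipath g₁' → IsDipath g₂' →
        g₁ 1 = g₂ 0 → g₁' 1 = g₂' 0 →
        trc g₁ ∈ I₁ → trc g₂ ∈ I₂ → trc g₁' ∈ I₁ → trc g₂' ∈ I₂ →
        (TraceLE (trc (concatFun g₁ g₂)) (trc (concatFun g₁' g₂')) ↔
          TraceLE (trc g₁) (trc g₁') ∧ TraceLE (trc g₂) (trc g₂'))) ∧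
      -- every chain in [α, t] is (corresponds to) a chain in the product of the two chains
      (∀ C : Set (Trace X), C ⊆ J → IsChain TraceLE C →
        IsChain (fun p q : Trace X × Trace X => TraceLE p.1 q.1 ∧ TraceLE p.2 q.2)
          {p : Trace X × Trace X | p.1 ∈ I₁ ∧ p.2 ∈ I₂ ∧
            ∃ g₁ g₂ : unitInterval → X, IsDipath g₁ ∧ IsDipath g₂ ∧ g₁ 1 = g₂ 0 ∧
              p.1 = trc g₁ ∧ p.2 = trc g₂ ∧ trc (concatFun g₁ g₂) ∈ C}) := by
  rintro cα I₁ I₂ J rfl rfl rfl rfl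
  have concat_at {g₁ g₂ : unitInterval → X} (hg₁ : IsDipath g₁) (hg₂ : IsDipath g₂)
      (hg : g₁ 1 = g₂ 0) (hI₁ : trc g₁ ∈ TInterval (trc fun _ => t₁ 1) (trc t₁)) :
      IsFactorization (t₁ 1) (trc (concatFun g₁ g₂)) (trc g₁, trc g₂) :=
    (IsFactorization.iff_exists_of_mem_TInterval ht₁ hI₁).2 ⟨g₁, g₂, hg₁, hg₂, hg, rfl, rfl, rfl⟩
  have ht : IsFactorization (t₁ 1) (trc (concatFun t₁ t₂)) (trc t₁, trc t₂) :=
    ⟨t₁, t₂, ht₁, ht₂, rfl, hmid.symm, rfl, rfl⟩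
  refine ⟨⟨ht₁.isChain_TInterval_one, hmid ▸ ht₂.isChain_TInterval_zero⟩, fun c hc => ?_,
    fun g₁ g₂ hg₁ hg₂ hg hI₁ hI₂ =>
      ((concat_at hg₁ hg₂ hg hI₁).mem_TInterval_iff ht).2 ⟨hI₁, hI₂⟩,
    fun g₁ g₂ g₁' g₂' hg₁ hg₂ hg₁' hg₂' hg hg' hI₁ _ hI₁' _ =>
      (concat_at hg₁ hg₂ hg hI₁).traceLE_iff (concat_at hg₁' hg₂' hg' hI₁'),
    fun C _ hC => (IsFactorization.isChain (x := t₁ 1) hC).mono ?_⟩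
  · obtain ⟨p, hp⟩ := IsFactorization.exists_of_mem_TInterval hc
    obtain ⟨hI₁, hI₂⟩ := (hp.mem_TInterval_iff ht).1 hc
    exact ⟨p, ⟨hI₁, hI₂, (IsFactorization.iff_exists_of_mem_TInterval ht₁ hI₁).1 hp⟩,
      fun q ⟨hqI₁, _, hq⟩ =>
        ((IsFactorization.iff_exists_of_mem_TInterval ht₁ hqI₁).2 hq).unique hp⟩
  · rintro p ⟨hI₁, -, g₁, g₂, hg₁, hg₂, hg, hp₁, hp₂, hgC⟩
    exact ⟨_, hgC, (IsFactorization.iff_exists_of_mem_TInterval ht₁ hI₁).2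
      ⟨g₁, g₂, hg₁, hg₂, hg, hp₁, hp₂, rfl⟩⟩

end
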